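/- Fix n ≥ 1 and times 0 < T_1 < … < T_n with k_{j-1}(T_j,T_j) > 0 for j = 1,…,n, suppose Assumptions A and GD hold, and assume k̄_n(1,1) > 0, where k̄_n(t,s) = k̄(t,s) − Σ_{ℓ=1}^{n} k_{ℓ-1}(T_ℓ,T_ℓ) ᾱ_ℓ(t) ᾱ_ℓ(s). Then for all sufficiently small ε > 0 one has k_n(T_n+ε,T_n+ε) > 0, and the function β^ε(t) = k_n(T_n+εt,T_n+ε)/k_n(T_n+ε,T_n+ε) converges, uniformly in t ∈ [0,1] as ε → 0⁺, to β̄(t) = k̄_n(t,1)/k̄_n(1,1). -/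

import Mathlib

open MeasureTheory Filter Topology Set

noncomputable def condCov (k : ℝ → ℝ → ℝ) (T : ℕ → ℝ) : ℕ → ℝ → ℝ → ℝ
  | 0 => k
  | j + 1 => fun t s =>
      condCov k T j t s -
        condCov k T j t (T (j + 1)) / condCov k T j (T (j + 1)) (T (j + 1)) *
          condCov k T j s (T (j + 1))

noncomputable def condRec (k : ℝ → ℝ → ℝ) (T : ℕ → ℝ) (f : ℝ → ℝ → ℝ) : ℕ → ℝ → ℝ → ℝ
  | 0 => f
  | j + 1 => fun t S =>
      condRec k T f j t S -
        condCov k T j S (T (j + 1)) / condCov k T j (T (j + 1)) (T (j + 1)) *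
          condRec k T f j t (T (j + 1))

noncomputable def kbarN (k : ℝ → ℝ → ℝ) (T : ℕ → ℝ) (ρ : ℝ → ℝ → ℝ) (kbar : ℝ → ℝ → ℝ)
    (n : ℕ) (t s : ℝ) : ℝ :=
  kbar t s - ∑ ℓ ∈ Finset.range n, condCov k T ℓ (T (ℓ + 1)) (T (ℓ + 1)) *
    (condRec k T ρ ℓ t (T (ℓ + 1)) / condCov k T ℓ (T (ℓ + 1)) (T (ℓ + 1))) *
    (condRec k T ρ ℓ s (T (ℓ + 1)) / condCov k T ℓ (T (ℓ + 1)) (T (ℓ + 1)))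

/-- On a compact set, products of uniformly convergent families with continuous limits converge
uniformly. -/
theorem TendstoUniformlyOn.mul_of_isCompact {ι X : Type*} [TopologicalSpace X] {K : Set X}
    {F G : ι → X → ℝ} {f g : X → ℝ} {l : Filter ι} (hK : IsCompact K)
    (hF : TendstoUniformlyOn F f l K) (hG : TendstoUniformlyOn G g l K)
    (hf : ContinuousOn f K) (hg : ContinuousOn g K) :
    TendstoUniformlyOn (fun i x => F i x * G i x) (fun x => f x * g x) l K :=
  (tendstoLocallyUniformlyOn_iff_tendstoUniformlyOn_of_compact hK).1
    (hF.tendstoLocallyUniformlyOn.mul₀ hG.tendstoLocallyUniformlyOn hf hg)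

theorem TendstoUniformlyOn.const_mul_real {ι X : Type*} {K : Set X}
    {F : ι → X → ℝ} {f : X → ℝ} {l : Filter ι} (hF : TendstoUniformlyOn F f l K) (c : ℝ) :
    TendstoUniformlyOn (fun i x => c * F i x) (fun x => c * f x) l K :=
  (uniformContinuous_const_smul c).comp_tendstoUniformlyOn hF

theorem condCov_symm {k : ℝ → ℝ → ℝ} (hk : ∀ t s, k t s = k s t) (T : ℕ → ℝ) (j : ℕ) (t s : ℝ) :
    condCov k T j t s = condCov k T j s t := by
  induction j generalizing t s with
  | zero => exact hk t s
  | succ j ih =>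
    simp only [condCov]
    rw [ih t s]
    ring

/-- The conditional covariance vanishes at the last conditioning time. -/
theorem condCov_succ_right_eq_zero {k : ℝ → ℝ → ℝ} {T : ℕ → ℝ} {j : ℕ}
    (hj : condCov k T j (T (j + 1)) (T (j + 1)) ≠ 0) (t : ℝ) :
    condCov k T (j + 1) t (T (j + 1)) = 0 := by
  simp only [condCov]
  field_simp
  ring

theorem kbarN_succ (k : ℝ → ℝ → ℝ) (T : ℕ → ℝ) (ρ kbar : ℝ → ℝ → ℝ) (j : ℕ) (t s : ℝ) :
    kbarN k T ρ kbar (j + 1) t s = kbarN k T ρ kbar j t s -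
      (condCov k T j (T (j + 1)) (T (j + 1)))⁻¹ *
        (condRec k T ρ j t (T (j + 1)) * condRec k T ρ j s (T (j + 1))) := by
  simp only [kbarN, Finset.sum_range_succ]
  by_cases hc : condCov k T j (T (j + 1)) (T (j + 1)) = 0
  · simp [hc]
  · field_simp
    ring

theorem continuousOn_condRec {k : ℝ → ℝ → ℝ} {T : ℕ → ℝ} {ρ : ℝ → ℝ → ℝ} {K : Set ℝ} {n : ℕ}
    (hT : ∀ j < n, 0 < T (j + 1)) (hρ : ∀ S, 0 < S → ContinuousOn (fun t => ρ t S) K)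
    {j : ℕ} (hj : j ≤ n) {S : ℝ} (hS : 0 < S) :
    ContinuousOn (fun t => condRec k T ρ j t S) K := by
  induction j generalizing S with
  | zero => exact hρ S hS
  | succ j ih =>
    exact (ih (by omega) hS).sub (continuousOn_const.mul (ih (by omega) (hT j (by omega))))

theorem continuousOn_kbarN {k : ℝ → ℝ → ℝ} {T : ℕ → ℝ} {ρ kbar : ℝ → ℝ → ℝ} {K : Set ℝ} {n : ℕ}
    (hT : ∀ j < n, 0 < T (j + 1)) (hρ : ∀ S, 0 < S → ContinuousOn (fun t => ρ t S) K) {s : ℝ}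
    (hkbar : ContinuousOn (fun t => kbar t s) K) :
    ContinuousOn (fun t => kbarN k T ρ kbar n t s) K := by
  refine hkbar.sub (continuousOn_finsetSum _ fun j hj => ?_)
  have hj := Finset.mem_range.1 hj
  exact (continuousOn_const.mul
    ((continuousOn_condRec hT hρ hj.le (hT j hj)).div_const _)).mul continuousOn_const

/-- Convergence of rescaled increments passes from the covariance to the conditional
covariances. -/
theorem tendstoUniformlyOn_condCov_increment {k : ℝ → ℝ → ℝ} {T : ℕ → ℝ} {ρ : ℝ → ℝ → ℝ}
    {γ : ℝ → ℝ} {b : ℝ} {l : Filter ℝ} {K : Set ℝ} {n : ℕ} (hT : ∀ j < n, 0 < T (j + 1))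
    (hA : ∀ S : ℝ, 0 < S → TendstoUniformlyOn
      (fun ε t => (k (b + ε * t) S - k b S) / γ ε) (fun t => ρ t S) l K)
    {j : ℕ} (hj : j ≤ n) {S : ℝ} (hS : 0 < S) :
    TendstoUniformlyOn
      (fun ε t => (condCov k T j (b + ε * t) S - condCov k T j b S) / γ ε)
      (fun t => condRec k T ρ j t S) l K := by
  induction j generalizing S with
  | zero => exact hA S hS
  | succ j ih =>
    refine ((ih (by omega) hS).fun_sub ((ih (by omega) (hT j (by omega))).const_mul_real
      (condCov k T j S (T (j + 1)) / condCov k T j (T (j + 1)) (T (j + 1))))).congr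
      (Eventually.of_forall fun ε t _ => ?_)
    simp only [condCov]
    ring

/-- Convergence of rescaled second-order increments passes from the covariance to the conditional
covariances. -/
theorem tendstoUniformlyOn_condCov_second_increment {k : ℝ → ℝ → ℝ} {T : ℕ → ℝ}
    {ρ kbar : ℝ → ℝ → ℝ} {γ : ℝ → ℝ} {b : ℝ} {l : Filter ℝ} {K : Set ℝ} {n : ℕ}
    (hK : IsCompact K) (hT : ∀ j < n, 0 < T (j + 1))
    (hρ : ∀ S, 0 < S → ContinuousOn (fun t => ρ t S) K)
    (hA : ∀ S : ℝ, 0 < S → TendstoUniformlyOn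
      (fun ε t => (k (b + ε * t) S - k b S) / γ ε) (fun t => ρ t S) l K)
    {s : ℝ} (hs : s ∈ K)
    (hGD : TendstoUniformlyOn
      (fun ε t => (k (b + ε * t) (b + ε * s) - k (b + ε * t) b - k b (b + ε * s) + k b b) /
        (γ ε) ^ 2)
      (fun t => kbar t s) l K)
    {j : ℕ} (hj : j ≤ n) :
    TendstoUniformlyOn
      (fun ε t => (condCov k T j (b + ε * t) (b + ε * s) - condCov k T j (b + ε * t) b -
        condCov k T j b (b + ε * s) + condCov k T j b b) / (γ ε) ^ 2)
      (fun t => kbarN k T ρ kbar j t s) l K := by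
  induction j with
  | zero => simpa [kbarN, condCov] using hGD
  | succ j ih =>
    have hS := hT j (by omega)
    have hinc := tendstoUniformlyOn_condCov_increment hT hA (j := j) (by omega) hS
    have hmul := (hinc.mul_of_isCompact hK ((hinc.tendsto_at hs).tendstoUniformlyOn_const K)
      (continuousOn_condRec hT hρ (by omega) hS) continuousOn_const).const_mul_real
      (condCov k T j (T (j + 1)) (T (j + 1)))⁻¹
    refine (((ih (by omega)).fun_sub hmul).congr (Eventually.of_forall fun ε t _ => ?_)).congr_right
      fun t _ => (kbarN_succ k T ρ kbar j t s).symm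
    simp only [condCov]
    ring

/-- Under Assumptions A and GD, if `k̄_n(1,1) > 0` then eventually (as `ε → 0⁺`)
`k_n(T_n+ε,T_n+ε) > 0`, and the regression coefficient
`β^ε(t) = k_n(T_n+εt,T_n+ε)/k_n(T_n+ε,T_n+ε)` of the bridge converges uniformly on `[0,1]`
to `β̄(t) = k̄_n(t,1)/k̄_n(1,1)`. -/
theorem bridge_coefficient_convergence
    (k : ℝ → ℝ → ℝ) (T : ℕ → ℝ) (n : ℕ) (γ : ℝ → ℝ) (ρ : ℝ → ℝ → ℝ) (kbar : ℝ → ℝ → ℝ)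
    (hn : 1 ≤ n)
    (hkcont : ContinuousOn (fun p : ℝ × ℝ => k p.1 p.2) (Ici 0 ×ˢ Ici 0))
    (hksymm : ∀ t s, k t s = k s t)
    (hT1 : 0 < T 1)
    (hTmono : ∀ j, 1 ≤ j → j + 1 ≤ n → T j < T (j + 1))
    (hγpos : ∀ ε : ℝ, 0 < ε → 0 < γ ε)
    (hγ0 : Tendsto γ (𝓝[>] (0:ℝ)) (𝓝 0))
    (hpos : ∀ j < n, 0 < condCov k T j (T (j + 1)) (T (j + 1)))
    (hA : ∀ T' : ℝ, 0 < T' → TendstoUniformlyOn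
        (fun ε t => (k (T n + ε * t) T' - k (T n) T') / γ ε)
        (fun t => ρ t T') (𝓝[>] (0:ℝ)) (Icc 0 1))
    (hGD : TendstoUniformlyOn
        (fun ε (p : ℝ × ℝ) =>
          (k (T n + ε * p.1) (T n + ε * p.2) - k (T n + ε * p.1) (T n) -
            k (T n) (T n + ε * p.2) + k (T n) (T n)) / (γ ε) ^ 2)
        (fun p => kbar p.1 p.2) (𝓝[>] (0:ℝ)) (Icc 0 1 ×ˢ Icc 0 1))
    (hk11 : 0 < kbarN k T ρ kbar n 1 1) :
    (∀ᶠ ε in 𝓝[>] (0:ℝ), 0 < condCov k T n (T n + ε) (T n + ε)) ∧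
    TendstoUniformlyOn
      (fun ε t =>
        condCov k T n (T n + ε * t) (T n + ε) / condCov k T n (T n + ε) (T n + ε))
      (fun t => kbarN k T ρ kbar n t 1 / kbarN k T ρ kbar n 1 1)
      (𝓝[>] (0:ℝ)) (Icc 0 1) := by
  have hmem : (1 : ℝ) ∈ Icc (0 : ℝ) 1 := by simp
  have hTpos : ∀ j < n, 0 < T (j + 1) := by
    intro j hj
    induction j with
    | zero => exact hT1
    | succ j ih => exact (ih (by omega)).trans (hTmono (j + 1) (by omega) (by omega))
  obtain ⟨m, rfl⟩ : ∃ m, n = m + 1 := ⟨n - 1, by omega⟩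
  have hb : 0 < T (m + 1) := hTpos m (by omega)
  have hkc : ∀ ε : ℝ, 0 < ε → ∀ S : ℝ, 0 ≤ S →
      ContinuousOn (fun t => k (T (m + 1) + ε * t) S) (Icc 0 1) := by
    intro ε hε S hS
    refine hkcont.comp (f := fun t : ℝ => (T (m + 1) + ε * t, S)) (by fun_prop) fun t ht => ?_
    have := mul_nonneg hε.le ht.1
    exact ⟨mem_Ici.2 (by linarith), hS⟩
  have hρ : ∀ S, 0 < S → ContinuousOn (fun t => ρ t S) (Icc 0 1) := by
    intro S hS
    refine (hA S hS).continuousOn (Eventually.frequently ?_)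
    filter_upwards [self_mem_nhdsWithin] with ε hε
    exact ((hkc ε hε S hS.le).sub continuousOn_const).div_const _
  have hGD1 : TendstoUniformlyOn
      (fun ε t => (k (T (m + 1) + ε * t) (T (m + 1) + ε * 1) - k (T (m + 1) + ε * t) (T (m + 1)) -
        k (T (m + 1)) (T (m + 1) + ε * 1) + k (T (m + 1)) (T (m + 1))) / (γ ε) ^ 2)
      (fun t => kbar t 1) (𝓝[>] (0:ℝ)) (Icc 0 1) :=
    (hGD.comp fun t : ℝ => (t, (1 : ℝ))).mono fun t ht => ⟨ht, hmem⟩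
  have hkbar : ContinuousOn (fun t => kbar t 1) (Icc 0 1) := by
    refine hGD1.continuousOn (Eventually.frequently ?_)
    filter_upwards [self_mem_nhdsWithin] with ε hε
    have hε' : (0 : ℝ) < ε := hε
    exact ((((hkc ε hε _ (by linarith)).sub (hkc ε hε _ hb.le)).sub
      continuousOn_const).add continuousOn_const).div_const _
  have hzero : ∀ t, condCov k T (m + 1) t (T (m + 1)) = 0 :=
    condCov_succ_right_eq_zero (hpos m (by omega)).ne'
  have hlim : TendstoUniformlyOn
      (fun ε t => condCov k T (m + 1) (T (m + 1) + ε * t) (T (m + 1) + ε) / (γ ε) ^ 2)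
      (fun t => kbarN k T ρ kbar (m + 1) t 1) (𝓝[>] (0:ℝ)) (Icc 0 1) := by
    refine (tendstoUniformlyOn_condCov_second_increment isCompact_Icc hTpos hρ hA hmem hGD1
      le_rfl).congr (Eventually.of_forall fun ε t _ => ?_)
    simp [hzero, condCov_symm hksymm T (m + 1) (T (m + 1))]
  have hlim1 := hlim.tendsto_at hmem
  simp only [mul_one] at hlim1
  constructor
  · filter_upwards [hlim1.eventually_const_lt hk11, self_mem_nhdsWithin] with ε h hε
    exact (div_pos_iff_of_pos_right (pow_pos (hγpos ε hε) 2)).1 h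
  · refine (hlim.mul_of_isCompact isCompact_Icc
      ((hlim1.inv₀ hk11.ne').tendstoUniformlyOn_const _) (continuousOn_kbarN hTpos hρ hkbar)
      continuousOn_const).congr ?_
    filter_upwards [self_mem_nhdsWithin] with ε hε t _
    have := (hγpos ε hε).ne'
    simp only
    field_simp
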